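/- Let f be analytic on D with f(0)=0, f'(0)=1, satisfying z f'(z)/f(z) = √3((1+z)/(1−z))^{1/3} + 1 − √3 (principal branch) on D. Then |arg(z f'(z)/f(z) + (√3−1))| < π/6 for all z in D, and consequently Re(f(z)/z) > 0 on D, while f is not starlike (there exist z in D with Re(z f'(z)/f(z)) < 0). -/

import Mathlib

open Complex Metric Real

lemma aux_w {z : ℂ} (hz : z ∈ ball (0 : ℂ) 1) : 0 < ((1 + z) / (1 - z)).re := by
  have h1 : ‖z‖ < 1 := by simpa using hz
  have h2 : z.re * z.re + z.im * z.im < 1 := by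
    have := Complex.sq_norm z
    rw [Complex.normSq_apply] at this
    nlinarith [norm_nonneg z]
  have hne : (1 - z) ≠ 0 := by
    intro h
    have : z = 1 := by linear_combination -h
    rw [this] at h1; simp at h1
  have h3 : 0 < Complex.normSq (1 - z) := Complex.normSq_pos.2 hne
  rw [Complex.div_re, ← add_div]
  apply div_pos _ h3
  simp
  nlinarith

lemma aux_arg {w : ℂ} (hw : 0 < w.re) : |Complex.arg w / 3| < Real.pi / 6 := by
  have : |Complex.arg w| < Real.pi / 2 := Complex.abs_arg_lt_pi_div_two_iff.2 (Or.inl hw)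
  rw [abs_div, abs_of_pos (by norm_num : (0:ℝ) < 3)]
  linarith

lemma aux_p {w : ℂ} (hw : 0 < w.re) : ∃ r : ℝ, 0 < r ∧
    w ^ ((1 : ℂ) / 3) = r * (Complex.cos (Complex.arg w / 3 : ℝ) + Complex.sin (Complex.arg w / 3 : ℝ) * I) := by
  have hne : w ≠ 0 := by rintro rfl; simp at hw
  refine ⟨Real.exp (Real.log ‖w‖ / 3), Real.exp_pos _, ?_⟩
  rw [Complex.cpow_def_of_ne_zero hne, ← Complex.exp_mul_I, Complex.ofReal_exp, ← Complex.exp_add]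
  congr 1
  rw [Complex.log]
  push_cast
  ring

lemma aux_p2 {w : ℂ} (hw : 0 < w.re) (h1 : (w ^ ((1 : ℂ) / 3)).re = 1)
    (h2 : 1 ≤ 3 * (w ^ ((1 : ℂ) / 3)).im ^ 2) : False := by
  obtain ⟨r, hr, hp⟩ := aux_p hw
  have ha := aux_arg hw
  set θ := Complex.arg w / 3
  rw [hp, ← Complex.ofReal_cos, ← Complex.ofReal_sin] at h1 h2
  simp [-Complex.ofReal_cos, -Complex.ofReal_sin] at h1 h2
  rw [abs_lt] at ha
  have hpi := Real.pi_pos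
  have s1 : Real.sin θ < 1 / 2 := by
    rw [← Real.sin_pi_div_six]
    exact Real.sin_lt_sin_of_lt_of_le_pi_div_two (by linarith) (by linarith) ha.2
  have s2 : -(1 / 2) < Real.sin θ := by
    rw [← Real.sin_pi_div_six, ← Real.sin_neg]
    exact Real.sin_lt_sin_of_lt_of_le_pi_div_two (by linarith) (by linarith) ha.1
  have s3 : Real.sin θ ^ 2 < 1 / 4 := by nlinarith
  have s4 := Real.sin_sq_add_cos_sq θ
  have h3 : r ^ 2 * Real.cos θ ^ 2 = 1 := by rw [← mul_pow, h1]; norm_num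
  have h4 : 1 ≤ 3 * (r ^ 2 * Real.sin θ ^ 2) := by rw [← mul_pow]; exact h2
  have : 0 < r ^ 2 * (1 / 4 - Real.sin θ ^ 2) := mul_pos (by positivity) (by linarith)
  have h5 : r ^ 2 * Real.sin θ ^ 2 + r ^ 2 * Real.cos θ ^ 2 = r ^ 2 := by rw [← mul_add, s4, mul_one]
  nlinarith

/-- Jack / Nunokawa type boundary lemma. -/
lemma aux_jack (q : ℂ → ℂ) (hq : DifferentiableOn ℂ q (ball 0 1)) (hq0 : q 0 = 1)
    (z₀ : ℂ) (hz₀ : z₀ ∈ ball (0 : ℂ) 1) (hne : z₀ ≠ 0)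
    (hpos : ∀ z, ‖z‖ < ‖z₀‖ → 0 < (q z).re) (hz : (q z₀).re ≤ 0) :
    (q z₀).re = 0 ∧ (z₀ * deriv q z₀).im = 0 ∧
      (z₀ * deriv q z₀).re ≤ -(1 + (q z₀).im ^ 2) / 2 := by
  have hn : 0 < ‖z₀‖ := norm_pos_iff.2 hne
  have hz1 : ‖z₀‖ < 1 := by simpa using hz₀
  have hd : ∀ z ∈ ball (0 : ℂ) 1, DifferentiableAt ℂ q z := fun z hz =>
    hq.differentiableAt (isOpen_ball.mem_nhds hz)
  -- nonnegativity on the closed disc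
  have hnn : ∀ z, ‖z‖ ≤ ‖z₀‖ → 0 ≤ (q z).re := by
    intro z hzz
    have hzb : z ∈ ball (0 : ℂ) 1 := by simpa using lt_of_le_of_lt hzz hz1
    have hc : ContinuousAt (fun t : ℝ => (q (t * z)).re) 1 := by
      apply Complex.continuous_re.continuousAt.comp
      apply ContinuousAt.comp (g := q) (f := fun t : ℝ => (t : ℂ) * z)
      · simpa using (hd z hzb).continuousAt
      · fun_prop
    have ht : Filter.Tendsto (fun t : ℝ => (q (t * z)).re) (nhdsWithin 1 (Set.Iio 1))
        (nhds (q z).re) := by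
      have := hc.tendsto.mono_left (nhdsWithin_le_nhds (s := Set.Iio 1))
      simpa using this
    refine ge_of_tendsto ht ?_
    filter_upwards [Ioo_mem_nhdsLT (zero_lt_one' ℝ)] with t ht
    refine (hpos _ ?_).le
    rw [norm_mul, Complex.norm_real, Real.norm_of_nonneg ht.1.le]
    nlinarith [ht.2, ht.1, norm_nonneg z]
  have hre : (q z₀).re = 0 := le_antisymm hz (hnn _ le_rfl)
  refine ⟨hre, ?_, ?_⟩
  · -- tangential derivative
    have h1 : HasDerivAt (fun t : ℂ => z₀ * Complex.exp (t * I)) (z₀ * I) ((0 : ℝ) : ℂ) := by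
      have := ((((hasDerivAt_id ((0 : ℝ) : ℂ)).mul_const I).cexp).const_mul z₀)
      simpa using this
    have h2 : HasDerivAt (fun t : ℂ => q (z₀ * Complex.exp (t * I))) (deriv q z₀ * (z₀ * I))
        ((0 : ℝ) : ℂ) := by
      apply HasDerivAt.comp ((0 : ℝ) : ℂ) (h₂ := q) _ h1
      simpa using (hd z₀ hz₀).hasDerivAt
    have h3 := h2.real_of_complex
    have hmin : IsLocalMin (fun t : ℝ => (q (z₀ * Complex.exp (t * I))).re) 0 := by
      refine Filter.Eventually.of_forall fun t => ?_
      have : (q z₀).re ≤ (q (z₀ * Complex.exp (t * I))).re := by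
        rw [hre]; apply hnn
        rw [norm_mul, Complex.norm_exp_ofReal_mul_I, mul_one]
      simpa using this
    have := hmin.hasDerivAt_eq_zero h3
    have h4 : deriv q z₀ * (z₀ * I) = (z₀ * deriv q z₀) * I := by ring
    rw [h4, Complex.mul_I_re] at this
    linarith
  · -- Schwarz
    have hS : ∀ t : ℝ, 0 < t → t < 1 →
        Complex.normSq (q (t * z₀) - 1) ≤ t ^ 2 * Complex.normSq (q (t * z₀) + 1) := by
      intro t ht0 ht1
      have hp1 : ∀ z, ‖z‖ < ‖z₀‖ → q z + 1 ≠ 0 := by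
        intro z hzz h
        have h1 := hpos z hzz
        have := congrArg Complex.re h
        simp at this
        linarith
      have hdiff : DifferentiableOn ℂ (fun z => (q z - 1) / (q z + 1)) (ball 0 ‖z₀‖) := by
        have hs : DifferentiableOn ℂ q (ball 0 ‖z₀‖) := hq.mono (ball_subset_ball hz1.le)
        exact (hs.sub_const 1).div (hs.add_const 1) fun z hz => hp1 z (by simpa using hz)
      have hmaps : Set.MapsTo (fun z => (q z - 1) / (q z + 1)) (ball 0 ‖z₀‖)
          (ball ((fun z => (q z - 1) / (q z + 1)) 0) 1) := by
        intro z hz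
        have hzz : ‖z‖ < ‖z₀‖ := by simpa using hz
        have h1 := hpos z hzz
        simp only [hq0, sub_self, zero_div, mem_ball, dist_zero_right]
        rw [norm_div, div_lt_one (norm_pos_iff.2 (hp1 z hzz))]
        apply lt_of_pow_lt_pow_left₀ 2 (norm_nonneg _)
        rw [Complex.sq_norm, Complex.sq_norm, Complex.normSq_apply, Complex.normSq_apply]
        simp
        nlinarith
      have hmem : (t : ℂ) * z₀ ∈ ball (0 : ℂ) ‖z₀‖ := by
        simp [abs_of_pos ht0]
        nlinarith
      have := Complex.dist_le_div_mul_dist_of_mapsTo_ball hdiff (hmaps.mono_right ball_subset_closedBall) hmem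
      simp only [hq0, sub_self, zero_div, dist_zero_right, norm_mul, Complex.norm_real,
        Real.norm_of_nonneg ht0.le] at this
      have h5 : 1 / ‖z₀‖ * (t * ‖z₀‖) = t := by field_simp
      have hzz : ‖(t : ℂ) * z₀‖ < ‖z₀‖ := by simpa using hmem
      rw [h5, norm_div, div_le_iff₀ (norm_pos_iff.2 (hp1 _ hzz))] at this
      rw [← Complex.sq_norm, ← Complex.sq_norm, ← mul_pow]
      exact pow_le_pow_left₀ (norm_nonneg _) this 2
    have h1 : HasDerivAt (fun t : ℂ => t * z₀) z₀ ((1 : ℝ) : ℂ) := by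
      simpa using (hasDerivAt_id ((1 : ℝ) : ℂ)).mul_const z₀
    have h2 : HasDerivAt (fun t : ℂ => q (t * z₀)) (deriv q z₀ * z₀) ((1 : ℝ) : ℂ) := by
      apply HasDerivAt.comp ((1 : ℝ) : ℂ) (h₂ := q) _ h1
      simpa using (hd z₀ hz₀).hasDerivAt
    have h3 := h2.real_of_complex
    have h2' : HasDerivAt (fun t : ℂ => -I * q (t * z₀)) (-I * (deriv q z₀ * z₀)) ((1 : ℝ) : ℂ) :=
      h2.const_mul _
    have h3' := h2'.real_of_complex
    -- the function (1 - t^2)(|q|^2 + 1) - 2 (1 + t^2) Re q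
    have hψ : ∀ t : ℝ, 0 < t → t < 1 →
        (1 - t ^ 2) * ((q (t * z₀)).re ^ 2 + (-I * q (t * z₀)).re ^ 2 + 1)
          - 2 * (1 + t ^ 2) * (q (t * z₀)).re ≤ 0 := by
      intro t h0 h1
      have := hS t h0 h1
      rw [Complex.normSq_apply, Complex.normSq_apply] at this
      simp at this ⊢
      nlinarith
    have h6 : HasDerivAt (fun t : ℝ => (1 - t ^ 2) * ((q (t * z₀)).re ^ 2 + (-I * q (t * z₀)).re ^ 2 + 1)
          - 2 * (1 + t ^ 2) * (q (t * z₀)).re)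
          (-2 * ((q z₀).im ^ 2 + 1) - 4 * (z₀ * deriv q z₀).re) 1 := by
      have hp := (hasDerivAt_id (1 : ℝ)).pow 2
      have := ((hp.const_sub 1).mul (((h3.pow 2).add (h3'.pow 2)).add_const 1)).sub
        (((hp.const_add 1).const_mul 2).mul h3)
      refine HasDerivAt.congr_deriv this ?_
      simp [hre]
      ring
    have h7 : 0 ≤ -2 * ((q z₀).im ^ 2 + 1) - 4 * (z₀ * deriv q z₀).re := by
      have hs := h6.hasDerivWithinAt (s := Set.Iio 1)
      rw [hasDerivWithinAt_iff_tendsto_slope' (by simp)] at hs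
      refine ge_of_tendsto hs ?_
      filter_upwards [Ioo_mem_nhdsLT (zero_lt_one' ℝ)] with t ht
      have hh := hψ t ht.1 ht.2
      rw [slope_def_field]
      have e : (1 - (1:ℝ) ^ 2) * ((q ((1:ℝ) * z₀)).re ^ 2 + (-I * q ((1:ℝ) * z₀)).re ^ 2 + 1)
          - 2 * (1 + (1:ℝ) ^ 2) * (q ((1:ℝ) * z₀)).re = 0 := by
        simp [hre]
      rw [e]
      apply div_nonneg_of_nonpos
      · linarith
      · linarith [ht.2]
    linarith

theorem stmt_19 (f : ℂ → ℂ)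
    (hf : DifferentiableOn ℂ f (ball 0 1)) (hf0 : f 0 = 0) (hf1 : deriv f 0 = 1)
    (heq : ∀ z ∈ ball (0 : ℂ) 1, z ≠ 0 →
      z * deriv f z / f z =
        (Real.sqrt 3 : ℂ) * (((1 + z) / (1 - z)) ^ ((1 : ℂ) / 3)) + 1 - (Real.sqrt 3 : ℂ)) :
    (∀ z ∈ ball (0 : ℂ) 1, z ≠ 0 →
      |Complex.arg (z * deriv f z / f z + ((Real.sqrt 3 : ℂ) - 1))| < Real.pi / 6) ∧
    (∀ z ∈ ball (0 : ℂ) 1, 0 < (if z = 0 then 1 else f z / z).re) ∧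
    (∃ z ∈ ball (0 : ℂ) 1, (z * deriv f z / f z).re < 0) := by
  have h3 : (0 : ℝ) < Real.sqrt 3 := by positivity
  have h3s : Real.sqrt 3 ^ 2 = 3 := Real.sq_sqrt (by norm_num)
  refine ⟨?_, ?_, ?_⟩
  · intro z hz hz0
    rw [heq z hz hz0]
    have hw := aux_w hz
    obtain ⟨r, hr, hp⟩ := aux_p hw
    have ha := aux_arg hw
    have e : (Real.sqrt 3 : ℂ) * (((1 + z) / (1 - z)) ^ ((1 : ℂ) / 3)) + 1 - (Real.sqrt 3 : ℂ)
        + ((Real.sqrt 3 : ℂ) - 1) = ((Real.sqrt 3 * r : ℝ) : ℂ) *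
        (Complex.cos (Complex.arg ((1 + z) / (1 - z)) / 3 : ℝ)
          + Complex.sin (Complex.arg ((1 + z) / (1 - z)) / 3 : ℝ) * I) := by
      rw [hp, Complex.ofReal_mul]; ring
    rw [e, Complex.arg_mul_cos_add_sin_mul_I (by positivity)]
    · exact ha
    · rw [abs_lt] at ha
      have := Real.pi_pos
      constructor <;> linarith
  · -- main part
    set q := dslope f 0 with hqdef
    have hq0 : q 0 = 1 := by rw [hqdef, dslope_same, hf1]
    have hqn : ∀ z, z ≠ 0 → q z = f z / z := by
      intro z hz
      rw [hqdef, dslope_of_ne _ hz, slope_def_field, hf0, sub_zero, sub_zero]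
    have hq : DifferentiableOn ℂ q (ball 0 1) :=
      (Complex.differentiableOn_dslope (isOpen_ball.mem_nhds (by simp))).2 hf
    have hzq : ∀ z, z * q z = f z := by
      intro z
      by_cases hz : z = 0
      · simp [hz, hf0]
      · rw [hqn z hz]; field_simp
    suffices H : ∀ z ∈ ball (0 : ℂ) 1, 0 < (q z).re by
      intro z hz
      have := H z hz
      split_ifs with h
      · simp
      · rwa [hqn z h] at this
    by_contra! hcon
    obtain ⟨z₁, hz₁, hneg⟩ := hcon
    have hz₁' : ‖z₁‖ < 1 := by simpa using hz₁
    have hsub : closedBall (0 : ℂ) ‖z₁‖ ⊆ ball 0 1 := closedBall_subset_ball hz₁'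
    have hcont : ContinuousOn (fun z => (q z).re) (closedBall (0 : ℂ) ‖z₁‖) :=
      Complex.continuous_re.comp_continuousOn (hq.continuousOn.mono hsub)
    have hcomp : IsCompact (closedBall (0 : ℂ) ‖z₁‖ ∩ (fun z => (q z).re) ⁻¹' Set.Iic 0) :=
      (isCompact_closedBall _ _).of_isClosed_subset
        (hcont.preimage_isClosed_of_isClosed isClosed_closedBall isClosed_Iic) Set.inter_subset_left
    obtain ⟨z₀, ⟨hz₀b, hz₀⟩, hmin⟩ := hcomp.exists_isMinOn ⟨z₁, by simp, hneg⟩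
      continuous_norm.continuousOn
    have hz₀ball := hsub hz₀b
    have hz₀le : ‖z₀‖ ≤ ‖z₁‖ := by simpa using hz₀b
    have hz₀1 : ‖z₀‖ < 1 := by simpa using hz₀ball
    replace hz₀ : (q z₀).re ≤ 0 := hz₀
    have hne : z₀ ≠ 0 := by
      rintro rfl
      rw [hq0] at hz₀
      norm_num at hz₀
    have hpos : ∀ z, ‖z‖ < ‖z₀‖ → 0 < (q z).re := by
      intro z hz
      by_contra! hc
      have : ‖z₀‖ ≤ ‖z‖ := hmin ⟨by simpa using hz.le.trans hz₀le, hc⟩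
      linarith
    obtain ⟨hre, him, hder⟩ := aux_jack q hq hq0 z₀ hz₀ball hne hpos hz₀
    -- the differential equation at z₀
    have hode : z₀ * deriv f z₀ = ((Real.sqrt 3 : ℂ) * (((1 + z₀) / (1 - z₀)) ^ ((1 : ℂ) / 3))
        + 1 - (Real.sqrt 3 : ℂ)) * f z₀ := by
      have hf' : ContinuousAt (deriv f) z₀ :=
        ((hf.deriv isOpen_ball).differentiableAt (isOpen_ball.mem_nhds hz₀ball)).continuousAt
      have hfc : ContinuousAt f z₀ :=
        (hf.differentiableAt (isOpen_ball.mem_nhds hz₀ball)).continuousAt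
      have hw0 := aux_w hz₀ball
      have h1z : 1 - z₀ ≠ 0 := by
        intro h
        rw [h] at hw0; simp at hw0
      have hcw : ContinuousAt (fun z : ℂ => ((1 + z) / (1 - z)) ^ ((1 : ℂ) / 3)) z₀ := by
        refine ContinuousAt.cpow (f := fun z : ℂ => (1 + z) / (1 - z)) ?_ continuousAt_const (Or.inl hw0)
        exact (continuousAt_const.add continuousAt_id).div (continuousAt_const.sub continuousAt_id) h1z
      have hG : ContinuousAt (fun z : ℂ => z * deriv f z - ((Real.sqrt 3 : ℂ) *
          (((1 + z) / (1 - z)) ^ ((1 : ℂ) / 3)) + 1 - (Real.sqrt 3 : ℂ)) * f z) z₀ :=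
        (continuousAt_id.mul hf').sub ((((continuousAt_const.mul hcw).add continuousAt_const).sub
          continuousAt_const).mul hfc)
      have hl : Filter.Tendsto (fun t : ℝ => (t : ℂ) * z₀) (nhdsWithin 1 (Set.Iio 1)) (nhds z₀) := by
        have : ContinuousAt (fun t : ℝ => (t : ℂ) * z₀) 1 := by fun_prop
        simpa using this.tendsto.mono_left (nhdsWithin_le_nhds (s := Set.Iio 1))
      have ht := hG.tendsto.comp hl
      have ht0 : Filter.Tendsto (fun _ : ℝ => (0 : ℂ)) (nhdsWithin (1 : ℝ) (Set.Iio 1)) (nhds 0) :=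
        tendsto_const_nhds
      refine sub_eq_zero.1 (tendsto_nhds_unique (ht.congr' ?_) ht0)
      filter_upwards [Ioo_mem_nhdsLT (zero_lt_one' ℝ)] with t ht
      have hn : 0 < ‖z₀‖ := norm_pos_iff.2 hne
      have hlt : ‖(t : ℂ) * z₀‖ < ‖z₀‖ := by
        rw [norm_mul, Complex.norm_real, Real.norm_of_nonneg ht.1.le]
        nlinarith [ht.2]
      have htne : (t : ℂ) * z₀ ≠ 0 := mul_ne_zero (by exact_mod_cast ht.1.ne') hne
      have hfne : f (t * z₀) ≠ 0 := by
        rw [← hzq]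
        refine mul_ne_zero htne ?_
        intro h
        have := hpos _ hlt
        rw [h] at this; simp at this
      have := heq (t * z₀) (by simpa using hlt.trans hz₀1) htne
      rw [div_eq_iff hfne] at this
      simp only [Function.comp]
      rw [this, sub_self]
    have hderf : deriv f z₀ = q z₀ + z₀ * deriv q z₀ := by
      have h1 := (hasDerivAt_id z₀).mul
        (hq.differentiableAt (isOpen_ball.mem_nhds hz₀ball)).hasDerivAt
      have h2 : (id * q : ℂ → ℂ) = f := by
        funext z; simp [hzq z]
      rw [h2] at h1
      simpa using h1.deriv
    have hk : z₀ * deriv q z₀ = (Real.sqrt 3 : ℂ) *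
        ((((1 + z₀) / (1 - z₀)) ^ ((1 : ℂ) / 3)) - 1) * q z₀ := by
      rw [hderf, ← hzq] at hode
      apply mul_left_cancel₀ hne
      linear_combination hode
    have hw := aux_w hz₀ball
    set p := ((1 + z₀) / (1 - z₀)) ^ ((1 : ℂ) / 3) with hpdef
    rw [hk] at him hder
    simp [hre] at him hder
    have ha : (q z₀).im ≠ 0 := by
      intro h
      rw [h] at hder; norm_num at hder
    have hpre : p.re = 1 := by
      rcases him with h | h
      · linarith
      · exact absurd h ha
    refine aux_p2 hw hpre ?_
    rw [← hpdef]
    -- with a = Im q and k = √3 Im p, (1 + a^2)/2 ≤ k a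
    have hb : 1 + (q z₀).im ^ 2 ≤ 2 * (Real.sqrt 3 * p.im) * (q z₀).im := by linarith
    have hk2 : 3 * p.im ^ 2 = (Real.sqrt 3 * p.im) ^ 2 := by rw [mul_pow, h3s]
    rw [hk2]
    nlinarith [sq_nonneg ((q z₀).im - Real.sqrt 3 * p.im)]
  · refine ⟨((-13/14 : ℝ) : ℂ), ?_, ?_⟩
    · rw [mem_ball, dist_zero_right, Complex.norm_real, Real.norm_eq_abs, abs_lt]
      norm_num
    · rw [heq]
      · have e : ((1 + ((-13/14 : ℝ) : ℂ)) / (1 - ((-13/14 : ℝ) : ℂ))) ^ ((1 : ℂ) / 3)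
            = ((1 / 3 : ℝ) : ℂ) := by
          have e1 : (1 + ((-13/14 : ℝ) : ℂ)) / (1 - ((-13/14 : ℝ) : ℂ)) = (((1/27 : ℝ)) : ℂ) := by
            push_cast; norm_num
          have e2 : (1 : ℂ) / 3 = ((1 / 3 : ℝ) : ℂ) := by push_cast; rfl
          rw [e1, e2, ← Complex.ofReal_cpow (by norm_num)]
          congr 1
          rw [show (1 / 27 : ℝ) = (1 / 3 : ℝ) ^ (3 : ℝ) by norm_num, ← Real.rpow_mul (by norm_num)]
          norm_num
        rw [e, ← Complex.ofReal_mul, ← Complex.ofReal_one, ← Complex.ofReal_add,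
          ← Complex.ofReal_sub, Complex.ofReal_re]
        nlinarith
      · rw [mem_ball, dist_zero_right, Complex.norm_real, Real.norm_eq_abs, abs_lt]
        norm_num
      · rw [Complex.ofReal_ne_zero]; norm_num
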